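/- Let μ be a nonzero finite Borel measure on ℝ with μ(ℝ \ 𝕃) = 0. Let g : ℝ → ℝ be even and 1-periodic with g(0) ≠ 0, and suppose there is a sequence (a_k)_{k≥0} of nonnegative reals such that for every ξ ∈ ℝ the partial sums S_N(ξ) = Σ_{k=0}^{N} a_k·cos(2πkξ) converge to g(ξ) as N → ∞. Then there exists a nonzero finite Borel measure ν on ℝ with ν(ℝ \ 𝕃) = 0 such that ν̂(ξ) = g(ξ)·μ̂(ξ) for all ξ ∈ ℝ; in particular, if |μ̂(ξ)| ≤ C·f(|ξ|) for all |ξ| ≥ M, then |ν̂(ξ)| ≤ C·|g(ξ)|·f(|ξ|) for all |ξ| ≥ M. -/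

import Mathlib

open MeasureTheory Filter Set

/-- The Fourier transform of a measure on `ℝ`: `μ̂(ξ) = ∫ e^(−2πiξx) dμ(x)`. -/
noncomputable def fourierT (μ : Measure ℝ) (ξ : ℝ) : ℂ :=
  ∫ x, Complex.exp (((-2 * Real.pi * ξ * x : ℝ) : ℂ) * Complex.I) ∂μ

/-!
Convolving `μ` with `σ = ∑ₖ (aₖ / 2) (δₖ + δ₋ₖ)` multiplies `μ̂` by `σ̂ = ∑ₖ aₖ cos (2πkξ) = g`.
Since the `aₖ` are nonnegative, convergence of the series at `ξ = 0` makes `σ` a finite positive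
measure. As `σ` lives on `ℤ` and the Liouville numbers are invariant under integer translations,
`μ ∗ σ` still lives on the Liouville numbers; it is nonzero because its transform at `0` is
`g(0) μ(ℝ)`.
-/

theorem summable_of_tendsto_sum_range_succ_of_nonneg {a : ℕ → ℝ} (ha_nonneg : ∀ k, 0 ≤ a k) {c : ℝ}
    (h : Tendsto (fun N => ∑ k ∈ Finset.range (N + 1), a k) atTop (nhds c)) : Summable a :=
  ((hasSum_iff_tendsto_nat_of_nonneg ha_nonneg c).2 <| (tendsto_add_atTop_iff_nat 1).1 h).summable

theorem fourierT_eq_charFun (μ : Measure ℝ) (ξ : ℝ) :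
    fourierT μ ξ = charFun μ (-2 * Real.pi * ξ) := by
  simp only [fourierT, charFun_apply_real]
  push_cast
  rfl

theorem fourierT_at_zero_eq_zero_iff {μ : Measure ℝ} [IsFiniteMeasure μ] :
    fourierT μ 0 = 0 ↔ μ = 0 := by
  rw [fourierT_eq_charFun, mul_zero, charFun_zero, Complex.ofReal_eq_zero,
    measureReal_eq_zero_iff, Measure.measure_univ_eq_zero]

theorem fourierT_conv (μ ν : Measure ℝ) [IsFiniteMeasure μ] [IsFiniteMeasure ν] (ξ : ℝ) :
    fourierT (μ ∗ ν) ξ = fourierT μ ξ * fourierT ν ξ := by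
  simp only [fourierT_eq_charFun, charFun_conv]

theorem integrable_exp_fourierT (μ : Measure ℝ) [IsFiniteMeasure μ] (ξ : ℝ) :
    Integrable (fun x : ℝ => Complex.exp (((-2 * Real.pi * ξ * x : ℝ) : ℂ) * Complex.I)) μ :=
  Integrable.of_bound (by fun_prop) 1 <|
    Eventually.of_forall fun x => (Complex.norm_exp_ofReal_mul_I _).le

theorem hasSum_fourierT_sum {ι : Type*} (μ : ι → Measure ℝ) [IsFiniteMeasure (Measure.sum μ)]
    (ξ : ℝ) : HasSum (fun i => fourierT (μ i) ξ) (fourierT (Measure.sum μ) ξ) :=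
  hasSum_integral_measure (integrable_exp_fourierT _ ξ)

theorem fourierT_ofReal_smul {c : ℝ} (hc : 0 ≤ c) (μ : Measure ℝ) (ξ : ℝ) :
    fourierT (ENNReal.ofReal c • μ) ξ = c * fourierT μ ξ := by
  rw [fourierT, integral_smul_measure, ENNReal.toReal_ofReal hc, Complex.real_smul, fourierT]

theorem fourierT_dirac (x ξ : ℝ) :
    fourierT (Measure.dirac x) ξ =
      Complex.exp (((-2 * Real.pi * ξ * x : ℝ) : ℂ) * Complex.I) :=
  integral_dirac _ _

theorem fourierT_dirac_add_dirac_neg (x ξ : ℝ) :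
    fourierT (Measure.dirac x + Measure.dirac (-x)) ξ = 2 * Real.cos (2 * Real.pi * x * ξ) := by
  calc fourierT (Measure.dirac x + Measure.dirac (-x)) ξ
      = fourierT (Measure.dirac x) ξ + fourierT (Measure.dirac (-x)) ξ :=
        integral_add_measure (integrable_exp_fourierT _ ξ) (integrable_exp_fourierT _ ξ)
    _ = 2 * Real.cos (2 * Real.pi * x * ξ) := by
        rw [fourierT_dirac, fourierT_dirac, Complex.ofReal_cos, Complex.two_cos, add_comm]
        push_cast
        ring_nf

/-- The measure `∑ₖ (aₖ / 2) (δₖ + δ₋ₖ)` on `ℝ`, whose Fourier transform is the cosine series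
`∑ₖ aₖ cos (2πkξ)` when `a` is nonnegative and summable. Negative coefficients are truncated
to `0` by `ENNReal.ofReal`. -/
noncomputable def cosineMeasure (a : ℕ → ℝ) : Measure ℝ :=
  Measure.sum fun k : ℕ =>
    ENNReal.ofReal (a k / 2) • (Measure.dirac (k : ℝ) + Measure.dirac (-k : ℝ))

section cosineMeasure

variable {a : ℕ → ℝ}

theorem isFiniteMeasure_cosineMeasure (ha : Summable a) : IsFiniteMeasure (cosineMeasure a) := by
  have total_mass : cosineMeasure a univ = (∑' k, ENNReal.ofReal (a k / 2)) * (1 + 1) := by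
    simp only [cosineMeasure, Measure.sum_apply _ MeasurableSet.univ, Measure.smul_apply,
      Measure.add_apply, measure_univ, smul_eq_mul, ENNReal.tsum_mul_right]
  refine ⟨total_mass ▸ ENNReal.mul_lt_top ?_ (by simp)⟩
  exact (ha.div_const 2).tsum_ofReal_lt_top

theorem hasSum_fourierT_cosineMeasure (ha : Summable a) (ha_nonneg : ∀ k, 0 ≤ a k) (ξ : ℝ) :
    HasSum (fun k : ℕ => ((a k * Real.cos (2 * Real.pi * k * ξ) : ℝ) : ℂ))
      (fourierT (cosineMeasure a) ξ) := by
  have fourierT_term (k : ℕ) :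
      fourierT (ENNReal.ofReal (a k / 2) • (Measure.dirac (k : ℝ) + Measure.dirac (-k : ℝ))) ξ =
        ((a k * Real.cos (2 * Real.pi * k * ξ) : ℝ) : ℂ) := by
    rw [fourierT_ofReal_smul (div_nonneg (ha_nonneg k) zero_le_two), fourierT_dirac_add_dirac_neg]
    push_cast
    ring
  have := isFiniteMeasure_cosineMeasure ha
  unfold cosineMeasure at this ⊢
  simp_rw [← fourierT_term]
  exact hasSum_fourierT_sum _ ξ

theorem ae_cosineMeasure_mem_range_intCast (a : ℕ → ℝ) :
    ∀ᵐ x ∂cosineMeasure a, x ∈ range ((↑) : ℤ → ℝ) := by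
  refine Measure.ae_sum_iff.2 fun k => Measure.ae_smul_measure (ae_add_measure_iff.2 ⟨?_, ?_⟩) _
  · exact (ae_dirac_eq (k : ℝ)) ▸ ⟨k, by simp⟩
  · exact (ae_dirac_eq (-k : ℝ)) ▸ ⟨-k, by simp⟩

theorem fourierT_cosineMeasure_eq_of_tendsto (ha : Summable a) (ha_nonneg : ∀ k, 0 ≤ a k)
    {ξ c : ℝ}
    (h : Tendsto (fun N : ℕ => ∑ k ∈ Finset.range (N + 1), a k * Real.cos (2 * Real.pi * k * ξ))
      atTop (nhds c)) :
    fourierT (cosineMeasure a) ξ = c := by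
  have partial_sums := (tendsto_add_atTop_iff_nat 1).2
    (hasSum_fourierT_cosineMeasure ha ha_nonneg ξ).tendsto_sum_nat
  refine tendsto_nhds_unique partial_sums ?_
  exact_mod_cast (Complex.continuous_ofReal.tendsto c).comp h

end cosineMeasure

theorem ae_conv_of_ae {M : Type*} [AddMonoid M] [MeasurableSpace M] [MeasurableAdd₂ M]
    {μ ν : Measure M} [SFinite ν] {p q r : M → Prop} (hr : MeasurableSet {z | r z})
    (hμ : ∀ᵐ x ∂μ, p x) (hν : ∀ᵐ y ∂ν, q y) (h : ∀ x y, p x → q y → r (x + y)) :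
    ∀ᵐ z ∂(μ ∗ ν), r z := by
  refine (ae_map_iff (by fun_prop) hr).2 ?_
  filter_upwards [Measure.quasiMeasurePreserving_fst.ae hμ,
    Measure.quasiMeasurePreserving_snd.ae hν] with z hz₁ hz₂ using h _ _ hz₁ hz₂

theorem liouville_add_intCast_iff {x : ℝ} {m : ℤ} : Liouville (x + m) ↔ Liouville x := by
  simp only [← forall_liouvilleWith_iff, LiouvilleWith.add_int_iff]

theorem ae_liouville_conv {μ ν : Measure ℝ} [SFinite ν] (hμ : ∀ᵐ x ∂μ, Liouville x)
    (hν : ∀ᵐ y ∂ν, y ∈ range ((↑) : ℤ → ℝ)) : ∀ᵐ z ∂(μ ∗ ν), Liouville z := by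
  refine ae_conv_of_ae IsGδ.setOfPred_liouville.measurableSet hμ hν ?_
  rintro x _ hx ⟨m, rfl⟩
  exact liouville_add_intCast_iff.2 hx

theorem stmt5 (μ : Measure ℝ) [IsFiniteMeasure μ] (hμ_ne : μ ≠ 0)
    (hμL : μ {x : ℝ | Liouville x}ᶜ = 0)
    (g : ℝ → ℝ)
    (hg_even : ∀ x, g (-x) = g x)
    (hg_per : ∀ x, g (x + 1) = g x)
    (hg0 : g 0 ≠ 0)
    (a : ℕ → ℝ) (ha_nonneg : ∀ k, 0 ≤ a k)
    (ha_conv : ∀ ξ : ℝ, Tendsto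
      (fun N : ℕ => ∑ k ∈ Finset.range (N + 1), a k * Real.cos (2 * Real.pi * k * ξ))
      atTop (nhds (g ξ))) :
    ∃ ν : Measure ℝ, ν ≠ 0 ∧ IsFiniteMeasure ν ∧ ν {x : ℝ | Liouville x}ᶜ = 0 ∧
      (∀ ξ : ℝ, fourierT ν ξ = (g ξ : ℂ) * fourierT μ ξ) ∧
      ∀ (f : ℝ → ℝ) (C M : ℝ),
        (∀ ξ : ℝ, M ≤ |ξ| → ‖fourierT μ ξ‖ ≤ C * f |ξ|) →
        ∀ ξ : ℝ, M ≤ |ξ| → ‖fourierT ν ξ‖ ≤ C * |g ξ| * f |ξ| := by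
  have ha : Summable a :=
    summable_of_tendsto_sum_range_succ_of_nonneg ha_nonneg (by simpa using ha_conv 0)
  have := isFiniteMeasure_cosineMeasure ha
  have fourierT_eq (ξ : ℝ) : fourierT (μ ∗ cosineMeasure a) ξ = g ξ * fourierT μ ξ := by
    rw [fourierT_conv, fourierT_cosineMeasure_eq_of_tendsto ha ha_nonneg (ha_conv ξ), mul_comm]
  refine ⟨μ ∗ cosineMeasure a, ?_, inferInstance, ?_, fourierT_eq, ?_⟩
  · rw [ne_eq, ← fourierT_at_zero_eq_zero_iff, fourierT_eq]
    exact mul_ne_zero (Complex.ofReal_ne_zero.2 hg0) (mt fourierT_at_zero_eq_zero_iff.1 hμ_ne)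
  · exact ae_liouville_conv hμL (ae_cosineMeasure_mem_range_intCast a)
  · intro f C M hf ξ hξ
    calc ‖fourierT (μ ∗ cosineMeasure a) ξ‖ = |g ξ| * ‖fourierT μ ξ‖ := by
          rw [fourierT_eq, norm_mul, Complex.norm_real, Real.norm_eq_abs]
      _ ≤ |g ξ| * (C * f |ξ|) := by gcongr; exact hf ξ hξ
      _ = C * |g ξ| * f |ξ| := by ring
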